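/- There exists an integer n₀ such that for all integers n ≥ n₀ and all reals R, ε > 0 with 1 < R/ε < n/ln n, the minimal number L of closed Euclidean balls of radius ε needed to cover the closed Euclidean ball of radius R in ℝⁿ satisfies L ≤ (8e · n^{5/2} · ln n / (ln n − 2)) · (R/ε)ⁿ. -/

import Mathlib

/-!
A ball of radius `R` is covered greedily by balls whose centres are drawn from a *smaller*
concentric ball. For balls of radius about `q < R`, the centres are taken in the ball `B` of radius
about `√(R² - q²)`: for every `x` with `‖x‖ ≤ R`, the intersection of `B` with the ball of radius
`q` about `x` contains the ball of radius `(q / R) √(R² - q²)` about `(1 - q² / R²) x`, flattened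
in the direction of `x` (`lens_volume`), so a uniformly random centre in `B` covers `x` with
probability at least `p ≈ n⁻¹ (q / R) ^ n` up to a constant, uniformly in `x`. The radii are relaxed by a factor
`1 + 1 / n` so that a flattening by the factor `1 / n` suffices; this costs only a constant in `p`.

By Fubini some centre covers at least a fraction `p` of what is still uncovered, hence `k`
centres leave uncovered at most a fraction `(1 - p) ^ k` of the volume (`greedy_cover`). As soon
as the uncovered part has smaller volume than a ball of radius `δ = ε / n`, enlarging all radii by
`δ` covers everything (`exists_cover`). This happens for `k ≈ p⁻¹ n log (R / δ)`, which is
`O (n² log n (R / ε) ^ n)`, and is eventually smaller than `n ^ (5 / 2) (R / ε) ^ n`.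
-/

open Metric

open MeasureTheory

/-! ### Volume of the intersection of two balls -/

/-- The linear map that contracts the direction of `x` by the factor `a` and fixes the
orthogonal complement of `x`; it is the identity when `x = 0`. -/
noncomputable def squeeze {n : ℕ} (x : EuclideanSpace ℝ (Fin n)) (a : ℝ) :
    EuclideanSpace ℝ (Fin n) →ₗ[ℝ] EuclideanSpace ℝ (Fin n) :=
  LinearMap.transvection ((-(1 - a) / ‖x‖ ^ 2) • (innerₗ (EuclideanSpace ℝ (Fin n)) x)) x

lemma squeeze_apply {n : ℕ} (x w : EuclideanSpace ℝ (Fin n)) (a : ℝ) :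
    squeeze x a w = w + ((-(1 - a) / ‖x‖ ^ 2) * inner ℝ x w) • x := by
  simp [squeeze, LinearMap.transvection.apply]

lemma le_det_squeeze {n : ℕ} (x : EuclideanSpace ℝ (Fin n)) {a : ℝ} (ha1 : a ≤ 1) :
    a ≤ LinearMap.det (squeeze x a) := by
  rw [squeeze, LinearMap.transvection.det]
  rcases eq_or_ne x 0 with rfl | hx
  · simpa using ha1
  · have : ‖x‖ ≠ 0 := norm_ne_zero_iff.mpr hx
    simp only [LinearMap.smul_apply, innerₗ_apply_apply, real_inner_self_eq_norm_sq, smul_eq_mul]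
    field_simp
    linarith

lemma inner_squeeze {n : ℕ} (x w : EuclideanSpace ℝ (Fin n)) (a : ℝ) :
    inner ℝ x (squeeze x a w) = a * inner ℝ x w := by
  rw [squeeze_apply, inner_add_right, inner_smul_right, real_inner_self_eq_norm_sq]
  rcases eq_or_ne x 0 with rfl | hx
  · simp
  · have : ‖x‖ ≠ 0 := norm_ne_zero_iff.mpr hx
    field_simp
    ring

lemma norm_squeeze_sq_le {n : ℕ} (x w : EuclideanSpace ℝ (Fin n)) {a : ℝ} (ha0 : 0 ≤ a)
    (ha1 : a ≤ 1) : ‖squeeze x a w‖ ^ 2 ≤ ‖w‖ ^ 2 := by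
  rw [squeeze_apply, norm_add_sq_real, inner_smul_right, norm_smul, mul_pow, Real.norm_eq_abs,
    sq_abs, real_inner_comm x w]
  rcases eq_or_ne x 0 with rfl | hx
  · simp
  · have hx0 : ‖x‖ ≠ 0 := norm_ne_zero_iff.mpr hx
    have key : ‖w‖ ^ 2 + 2 * (-(1 - a) / ‖x‖ ^ 2 * inner ℝ x w * inner ℝ x w)
        + (-(1 - a) / ‖x‖ ^ 2 * inner ℝ x w) ^ 2 * ‖x‖ ^ 2
        = ‖w‖ ^ 2 - (1 - a ^ 2) * (inner ℝ x w / ‖x‖) ^ 2 := by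
      field_simp
      ring
    have h1 : 0 ≤ (1 - a ^ 2) * (inner ℝ x w / ‖x‖) ^ 2 :=
      mul_nonneg (by nlinarith) (sq_nonneg _)
    linarith

/-- Every point `x` of the ball of radius `R` sees, within distance `q` (relaxed by the factor
`1 + η`), a large part of the ball of radius `√(R² - q²)` (relaxed likewise). The witness is the
squeezed ball of radius `(q / R) √(R² - q²)` about `(1 - q² / R²) x`: for a displacement orthogonal
to `x` both distance constraints hold without relaxation, and squeezing makes all displacements
nearly orthogonal to `x`. -/
lemma lens_volume {n : ℕ} {q R η : ℝ} (hq : 0 < q) (hqR : q < R) (hη : 0 < η) (hη1 : η ≤ 1)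
    {x : EuclideanSpace ℝ (Fin n)} (hx : ‖x‖ ≤ R) :
    ENNReal.ofReal η * volume (closedBall (0 : EuclideanSpace ℝ (Fin n))
        (q / R * √(R ^ 2 - q ^ 2))) ≤
      volume (closedBall (0 : EuclideanSpace ℝ (Fin n)) (√(R ^ 2 - q ^ 2) * (1 + η)) ∩
        closedBall x (q * (1 + η))) := by
  have hR : 0 < R := hq.trans hqR
  set S := √(R ^ 2 - q ^ 2) with hS
  have hSsq : S ^ 2 = R ^ 2 - q ^ 2 := Real.sq_sqrt (by nlinarith)
  have hS0 : 0 < S := Real.sqrt_pos.mpr (by nlinarith)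
  set l : ℝ := 1 - q ^ 2 / R ^ 2 with hl
  have hlS : l * R ^ 2 = S ^ 2 := by rw [hl, hSsq]; field_simp
  have hl0 : 0 ≤ l := by
    by_contra h
    push Not at h
    nlinarith [pow_pos hR 2, pow_pos hS0 2]
  have hsub : (fun v => l • x + v) ''
      (squeeze x η '' closedBall (0 : EuclideanSpace ℝ (Fin n)) (q / R * S)) ⊆
      closedBall (0 : EuclideanSpace ℝ (Fin n)) (S * (1 + η)) ∩ closedBall x (q * (1 + η)) := by
    rintro _ ⟨_, ⟨w, hw, rfl⟩, rfl⟩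
    rw [mem_closedBall_zero_iff] at hw
    set v := squeeze x η w with hv
    have hx2 : ‖x‖ ^ 2 ≤ R ^ 2 := pow_le_pow_left₀ (norm_nonneg _) hx 2
    have hvn : ‖v‖ ^ 2 ≤ (q / R * S) ^ 2 :=
      (norm_squeeze_sq_le x w hη.le hη1).trans (pow_le_pow_left₀ (norm_nonneg _) hw 2)
    have hr : q / R * S ≤ R := by
      have hSR : S ≤ R := abs_le_of_sq_le_sq' (by nlinarith) hR.le |>.2
      calc q / R * S ≤ 1 * S := by
            gcongr
            exact (div_le_one hR).mpr hqR.le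
        _ ≤ R := by linarith
    have hin : |inner ℝ x v| ≤ η * R ^ 2 := by
      rw [hv, inner_squeeze, abs_mul, abs_of_pos hη]
      gcongr
      calc |inner ℝ x w| ≤ ‖x‖ * ‖w‖ := abs_real_inner_le_norm x w
        _ ≤ R * R := by gcongr; exact hw.trans hr
        _ = R ^ 2 := by ring
    obtain ⟨hin1, hin2⟩ := abs_le.mp hin
    have hrsq : (q / R * S) ^ 2 = q ^ 2 * l := by
      rw [mul_pow, div_pow, ← hlS]; field_simp
    have hqq : (1 - l) * R ^ 2 = q ^ 2 := by rw [hl]; field_simp; ring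
    have hl1 : 0 ≤ 1 - l := by rw [hl]; simp; positivity
    constructor
    · rw [mem_closedBall_zero_iff]
      apply abs_le_of_sq_le_sq' _ (by positivity) |>.2
      rw [norm_add_sq_real, norm_smul, mul_pow, Real.norm_eq_abs, sq_abs, real_inner_smul_left]
      have h1 : l ^ 2 * ‖x‖ ^ 2 ≤ l ^ 2 * R ^ 2 := by gcongr
      have h2 : l * inner ℝ x v ≤ l * (η * R ^ 2) := by gcongr
      have h3 : l ^ 2 * R ^ 2 + q ^ 2 * l = S ^ 2 := by
        rw [← hqq, ← hlS]; ring
      have h4 : l * (η * R ^ 2) = η * S ^ 2 := by rw [← hlS]; ring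
      nlinarith [mul_nonneg (sq_nonneg S) (sq_nonneg η)]
    · rw [mem_closedBall_iff_norm]
      apply abs_le_of_sq_le_sq' _ (by positivity) |>.2
      have he : l • x + v - x = v - (1 - l) • x := by module
      rw [he, norm_sub_sq_real, norm_smul, mul_pow, Real.norm_eq_abs, sq_abs,
        real_inner_smul_right, real_inner_comm]
      have h1 : (1 - l) ^ 2 * ‖x‖ ^ 2 ≤ (1 - l) ^ 2 * R ^ 2 := by gcongr
      have h2 : (1 - l) * (-(η * R ^ 2)) ≤ (1 - l) * inner ℝ x v := by gcongr
      have h3 : (1 - l) ^ 2 * R ^ 2 + q ^ 2 * l = q ^ 2 := by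
        have : (1 - l) ^ 2 * R ^ 2 = (1 - l) * q ^ 2 := by rw [← hqq]; ring
        rw [this]; ring
      have h4 : (1 - l) * (-(η * R ^ 2)) = -(η * q ^ 2) := by rw [← hqq]; ring
      nlinarith [mul_nonneg (sq_nonneg q) (sq_nonneg η)]
  refine le_trans ?_ (measure_mono hsub)
  rw [Set.image_add_left, measure_preimage_add, Measure.addHaar_image_linearMap]
  gcongr
  exact (le_det_squeeze x hη1).trans (le_abs_self _)

/-! ### Greedy covering -/

/-- First moment method: if every point of `U` is within distance `s` of a `ν`-random centre with
probability at least `p`, then some centre covers at least a fraction `p` of `U`. -/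
lemma greedy_step {n : ℕ} (ν : Measure (EuclideanSpace ℝ (Fin n))) [IsProbabilityMeasure ν]
    {U : Set (EuclideanSpace ℝ (Fin n))} (hU : MeasurableSet U) (hUfin : volume U ≠ ⊤)
    {s p : ℝ} (hp : 0 ≤ p) (h : ∀ z ∈ U, ENNReal.ofReal p ≤ ν (closedBall z s)) :
    ∃ c, volume.real (U \ closedBall c s) ≤ (1 - p) * volume.real U := by
  set W : Set (EuclideanSpace ℝ (Fin n) × EuclideanSpace ℝ (Fin n)) :=
    {y | y.2 ∈ U ∧ dist y.2 y.1 ≤ s} with hW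
  have hWm : MeasurableSet W :=
    (measurable_snd hU).inter
      (measurableSet_le (measurable_snd.dist measurable_fst) measurable_const)
  have h1 : (ν.prod volume) W = ∫⁻ c, volume (U ∩ closedBall c s) ∂ν := by
    rw [Measure.prod_apply hWm]
    rfl
  have h2 : ENNReal.ofReal p * volume U ≤ (ν.prod volume) W := by
    rw [Measure.prod_apply_symm hWm, ← setLIntegral_const]
    rw [← lintegral_indicator hU]
    apply lintegral_mono
    intro z
    by_cases hz : z ∈ U
    · rw [Set.indicator_of_mem hz]
      refine (h z hz).trans (measure_mono ?_)
      intro c hc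
      exact ⟨hz, by rw [dist_comm]; exact hc⟩
    · rw [Set.indicator_of_notMem hz]
      exact zero_le
  have hfin : ∫⁻ c, volume (U ∩ closedBall c s) ∂ν ≠ ⊤ := by
    refine ne_top_of_le_ne_top hUfin ?_
    calc ∫⁻ c, volume (U ∩ closedBall c s) ∂ν ≤ ∫⁻ _, volume U ∂ν :=
          lintegral_mono fun c => measure_mono Set.inter_subset_left
      _ = volume U := by simp
  obtain ⟨c, hc⟩ := exists_lintegral_le hfin
  refine ⟨c, ?_⟩
  have h3 : ENNReal.ofReal p * volume U ≤ volume (U ∩ closedBall c s) := (h2.trans_eq h1).trans hc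
  have h4 : p * volume.real U ≤ volume.real (U ∩ closedBall c s) := by
    have := ENNReal.toReal_mono (ne_top_of_le_ne_top hUfin (measure_mono Set.inter_subset_left)) h3
    rwa [ENNReal.toReal_mul, ENNReal.toReal_ofReal hp] at this
  have h5 := measureReal_inter_add_sdiff (μ := volume) (s := U) (t := closedBall c s)
    measurableSet_closedBall hUfin
  linarith

lemma greedy_cover {n : ℕ} (ν : Measure (EuclideanSpace ℝ (Fin n))) [IsProbabilityMeasure ν]
    {U : Set (EuclideanSpace ℝ (Fin n))} (hU : MeasurableSet U) (hUfin : volume U ≠ ⊤)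
    {s p : ℝ} (hp : 0 ≤ p) (hp1 : p ≤ 1) (h : ∀ z ∈ U, ENNReal.ofReal p ≤ ν (closedBall z s))
    (k : ℕ) : ∃ C : Finset (EuclideanSpace ℝ (Fin n)), C.card ≤ k ∧
      volume.real (U \ ⋃ c ∈ C, closedBall c s) ≤ (1 - p) ^ k * volume.real U := by
  classical
  induction k with
  | zero => exact ⟨∅, by simp⟩
  | succ k ih =>
    obtain ⟨C, hC, hvol⟩ := ih
    have hm : MeasurableSet (U \ ⋃ c ∈ C, closedBall c s) :=
      hU.diff (C.measurableSet_biUnion fun c _ => measurableSet_closedBall)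
    obtain ⟨c, hc⟩ := greedy_step ν hm
      (ne_top_of_le_ne_top hUfin (measure_mono Set.sdiff_subset)) hp
      (fun z hz => h z hz.1)
    refine ⟨insert c C, (Finset.card_insert_le _ _).trans (by omega), ?_⟩
    rw [Finset.set_biUnion_insert, Set.union_comm, ← Set.sdiff_sdiff]
    calc _ ≤ _ := hc
      _ ≤ (1 - p) * ((1 - p) ^ k * volume.real U) := by
          gcongr
      _ = _ := by ring

/-- If the greedy procedure with `k` centres leaves less volume uncovered in the ball of radius
`R + δ` than a ball of radius `δ` has, then balls about these centres with radii enlarged by `δ`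
cover the ball of radius `R`. -/
lemma exists_cover {n : ℕ} {q R η δ : ℝ} (hq : 0 < q) (hδ : 0 < δ) (hqR : q < R + δ)
    (hη : 0 < η) (hη1 : η ≤ 1) {k : ℕ}
    (hk : (1 - η * (q / ((R + δ) * (1 + η))) ^ n) ^ k * (R + δ) ^ n < δ ^ n) :
    ∃ C : Finset (EuclideanSpace ℝ (Fin n)), C.card ≤ k ∧
      ∀ x ∈ closedBall (0 : EuclideanSpace ℝ (Fin n)) R,
        ∃ c ∈ C, dist x c ≤ q * (1 + η) + δ := by
  set R' := R + δ with hR'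
  have hR'0 : 0 < R' := hq.trans hqR
  set S := √(R' ^ 2 - q ^ 2) with hS
  have hS0 : 0 < S := Real.sqrt_pos.mpr (by nlinarith)
  set B := closedBall (0 : EuclideanSpace ℝ (Fin n)) (S * (1 + η)) with hB
  have hω : volume (closedBall (0 : EuclideanSpace ℝ (Fin n)) 1) ≠ 0 :=
    (measure_closedBall_pos volume _ one_pos).ne'
  have hω' : volume (closedBall (0 : EuclideanSpace ℝ (Fin n)) 1) ≠ ⊤ :=
    measure_closedBall_lt_top.ne
  have hBpos : volume B ≠ 0 := (measure_closedBall_pos volume _ (by positivity)).ne'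
  have hBfin : volume B ≠ ⊤ := measure_closedBall_lt_top.ne
  have : IsProbabilityMeasure (ProbabilityTheory.cond volume B) :=
    ProbabilityTheory.cond_isProbabilityMeasure_of_finite hBpos hBfin
  set p := η * (q / (R' * (1 + η))) ^ n with hp
  have hp0 : 0 ≤ p := by positivity
  have hp1 : p ≤ 1 := by
    have h0 : q / (R' * (1 + η)) ≤ 1 := by
      rw [div_le_one (by positivity)]
      nlinarith
    calc p ≤ 1 * 1 := by
          rw [hp]
          gcongr
          exact pow_le_one₀ (by positivity) h0
      _ = 1 := by norm_num
  have hprob : ∀ z ∈ closedBall (0 : EuclideanSpace ℝ (Fin n)) R',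
      ENNReal.ofReal p ≤ ProbabilityTheory.cond volume B (closedBall z (q * (1 + η))) := by
    intro z hz
    rw [mem_closedBall_zero_iff] at hz
    rw [ProbabilityTheory.cond_apply measurableSet_closedBall, mul_comm, ← div_eq_mul_inv,
      ENNReal.le_div_iff_mul_le (Or.inl hBpos) (Or.inl hBfin)]
    refine le_trans (le_of_eq ?_) (lens_volume hq hqR hη hη1 hz)
    rw [hB, Measure.addHaar_closedBall' volume _ (show 0 ≤ S * (1 + η) by positivity),
      Measure.addHaar_closedBall' volume _ (show 0 ≤ q / R' * S by positivity), ← mul_assoc, ← mul_assoc,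
      ← ENNReal.ofReal_mul hp0, ← ENNReal.ofReal_mul hη.le, finrank_euclideanSpace_fin, hp,
      mul_assoc, ← mul_pow]
    have hbase : q / (R' * (1 + η)) * (S * (1 + η)) = q / R' * S := by field_simp
    rw [hbase]
  obtain ⟨C, hC, hvol⟩ := greedy_cover (ProbabilityTheory.cond volume B)
    measurableSet_closedBall measure_closedBall_lt_top.ne hp0 hp1 hprob k
  refine ⟨C, hC, fun x hx => ?_⟩
  by_contra! hcon
  rw [mem_closedBall_zero_iff] at hx
  -- the `δ`-ball about a point missed by the enlarged balls lies in the uncovered part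
  have hsub : closedBall x δ ⊆ closedBall (0 : EuclideanSpace ℝ (Fin n)) R' \
      ⋃ c ∈ C, closedBall c (q * (1 + η)) := by
    intro y hy
    refine ⟨?_, ?_⟩
    · rw [mem_closedBall_iff_norm] at hy
      rw [mem_closedBall_zero_iff]
      calc ‖y‖ = ‖x + (y - x)‖ := by simp
        _ ≤ ‖x‖ + ‖y - x‖ := norm_add_le _ _
        _ ≤ R' := by linarith
    · simp only [Set.mem_iUnion, not_exists]
      intro c hc hyc
      have h1 := hcon c hc
      have h2 := dist_triangle x y c
      rw [mem_closedBall] at hy hyc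
      rw [dist_comm] at hy
      linarith
  have h1 : volume.real (closedBall x δ) ≤ _ :=
    (measureReal_mono hsub
      (ne_top_of_le_ne_top measure_closedBall_lt_top.ne (measure_mono Set.sdiff_subset))).trans hvol
  rw [Measure.addHaar_real_closedBall' volume _ hδ.le,
    Measure.addHaar_real_closedBall' volume _ hR'0.le, finrank_euclideanSpace_fin,
    ← mul_assoc] at h1
  have h2 := le_of_mul_le_mul_right h1 (ENNReal.toReal_pos hω hω')
  linarith

/-! ### Choice of parameters and asymptotics -/

/-- The covering probability for the relaxation `η = 1 / n` and the radius margin `ε / n` is at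
least `(n e⁵ (R / ε) ^ n)⁻¹`. -/
lemma prob_lower_bound {n : ℕ} (hn : 2 ≤ n) {R ε : ℝ} (hε : 0 < ε) (hRε : ε < R) :
    1 / (n * Real.exp 5 * (R / ε) ^ n) ≤
      1 / (n : ℝ) * ((ε - ε / n) / (1 + 1 / n) / ((R + ε / n) * (1 + 1 / n))) ^ n := by
  have hn2 : (2 : ℝ) ≤ n := by exact_mod_cast hn
  have hn0 : (0 : ℝ) < n := by linarith
  have hR : 0 < R := hε.trans hRε
  set u : ℝ := 1 / n with hu
  have hu0 : 0 < u := by positivity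
  have hu2 : u ≤ 1 / 2 := by rw [hu]; gcongr
  have hεn : ε / n = ε * u := by rw [hu]; ring
  have hexp : 1 + u ≤ Real.exp u := by linarith [Real.add_one_le_exp u]
  have hden : (R + ε / n) * (1 + u) ^ 2 ≤ R * Real.exp u ^ 3 := by
    calc (R + ε / n) * (1 + u) ^ 2 ≤ (R * (1 + u)) * (1 + u) ^ 2 := by
          gcongr
          rw [hεn]
          nlinarith
      _ = R * (1 + u) ^ 3 := by ring
      _ ≤ _ := by gcongr
  have hnum : ε * Real.exp (-(2 * u)) ≤ ε - ε / n := by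
    have h1 : Real.exp (-(2 * u)) ≤ 1 - u := by
      rw [Real.exp_neg]
      apply inv_le_of_inv_le₀ (by linarith)
      calc (1 - u)⁻¹ ≤ 2 * u + 1 := by
            rw [inv_le_iff_one_le_mul₀ (by linarith)]
            nlinarith
        _ ≤ _ := Real.add_one_le_exp _
    rw [hεn]
    nlinarith
  have hbase : ε / R * Real.exp (-(5 * u)) ≤
      (ε - ε / n) / (1 + u) / ((R + ε / n) * (1 + u)) := by
    have h1 : (ε - ε / n) / (1 + u) / ((R + ε / n) * (1 + u))
        = (ε - ε / n) / ((R + ε / n) * (1 + u) ^ 2) := by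
      rw [div_div]; congr 1; ring
    have h2 : ε / R * Real.exp (-(5 * u)) =
        ε * Real.exp (-(2 * u)) / (R * Real.exp u ^ 3) := by
      have : Real.exp (-(5 * u)) = Real.exp (-(2 * u)) / Real.exp u ^ 3 := by
        rw [← Real.exp_nat_mul, ← Real.exp_sub]
        congr 1
        push_cast
        ring
      rw [this, div_mul_div_comm]
    rw [h1, h2]
    have : 0 ≤ ε * Real.exp (-(2 * u)) := by positivity
    gcongr
    linarith
  calc 1 / (n * Real.exp 5 * (R / ε) ^ n) = u * (ε / R * Real.exp (-(5 * u))) ^ n := by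
        have h1 : Real.exp (-(5 * u)) ^ n = (Real.exp 5)⁻¹ := by
          rw [← Real.exp_nat_mul, ← Real.exp_neg]
          congr 1
          rw [hu]
          field_simp
        rw [mul_pow, h1, hu, div_pow, div_pow]
        field_simp
    _ ≤ _ := by gcongr

/-- Rogers' covering bound, Lemma 3 of the paper: there is `n₀` such that for
all `n ≥ n₀` and all `R, ε > 0` with `1 < R/ε < n/ln n`, the minimal number `L` of closed
`ε`-balls needed to cover the closed ball of radius `R` in `ℝⁿ` satisfies
`L ≤ (8e·n^{5/2}·ln n/(ln n − 2))·(R/ε)ⁿ`. -/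
theorem rogers_covering_bound :
    ∃ n₀ : ℕ, ∀ n : ℕ, n₀ ≤ n → ∀ R ε : ℝ, 0 < R → 0 < ε →
      1 < R / ε → R / ε < (n : ℝ) / Real.log n →
      (↑(sInf {k : ℕ | ∃ C : Finset (EuclideanSpace ℝ (Fin n)), C.card = k ∧
          ∀ x ∈ closedBall (0 : EuclideanSpace ℝ (Fin n)) R, ∃ c ∈ C, dist x c ≤ ε}) : ℝ) ≤
        8 * Real.exp 1 * (n : ℝ) ^ ((5 : ℝ) / 2) * Real.log n / (Real.log n - 2) *
          (R / ε) ^ n := by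
  have hcast : Filter.Tendsto (fun n : ℕ => (n : ℝ)) Filter.atTop Filter.atTop :=
    tendsto_natCast_atTop_atTop
  have ev1 : ∀ᶠ n : ℕ in Filter.atTop, 3 ≤ Real.log n :=
    (Real.tendsto_log_atTop.comp hcast).eventually_ge_atTop 3
  have ev2 : ∀ᶠ n : ℕ in Filter.atTop,
      (2 * (Real.exp 5 + 1)) * Real.log n ≤ (n : ℝ) ^ ((1 : ℝ) / 2) := by
    have h := (isLittleO_log_rpow_atTop (r := (1 : ℝ) / 2) (by norm_num)).bound
      (c := 1 / (2 * (Real.exp 5 + 1))) (by positivity)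
    filter_upwards [hcast.eventually h] with n hn
    rw [Real.norm_eq_abs, Real.norm_of_nonneg (by positivity)] at hn
    have h1 := (le_abs_self _).trans hn
    rw [one_div, ← div_eq_inv_mul, le_div_iff₀ (by positivity)] at h1
    linarith
  obtain ⟨n₀, hn₀⟩ := Filter.eventually_atTop.mp
    ((ev1.and ev2).and (Filter.eventually_ge_atTop 2))
  refine ⟨n₀, fun n hn R ε hR hε hT1 hT2 => ?_⟩
  obtain ⟨⟨hlog, hasym⟩, hn2⟩ := hn₀ n hn
  have hn2' : (2 : ℝ) ≤ n := by exact_mod_cast hn2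
  have hn0 : (0 : ℝ) < n := by linarith
  have hRε : ε < R := (one_lt_div hε).mp hT1
  set T := R / ε with hT
  have hTn : 1 ≤ T ^ n := one_le_pow₀ hT1.le
  set p : ℝ := 1 / (n : ℝ) * ((ε - ε / n) / (1 + 1 / n) / ((R + ε / n) * (1 + 1 / n))) ^ n with hp
  have hplow : 1 / (n * Real.exp 5 * T ^ n) ≤ p := prob_lower_bound hn2 hε hRε
  -- `M` bounds `p⁻¹ n log (n²)`, where `n²` bounds the ratio of the radii `R + ε / n` and `ε / n`
  set M : ℝ := n * Real.exp 5 * T ^ n * (n * (2 * Real.log n)) with hM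
  have hM0 : 0 ≤ M := by positivity
  set k : ℕ := ⌈M⌉₊ + 1 with hk
  have hkM : M < k := by
    rw [hk]; push_cast
    linarith [Nat.le_ceil M]
  have hkM' : (k : ℝ) ≤ M + 2 := by
    rw [hk]; push_cast
    linarith [Nat.ceil_lt_add_one hM0]
  have hδ : 0 < ε / n := by positivity
  have hεδ : 0 < ε - ε / n := by
    have : ε / n ≤ ε / 2 := by gcongr
    linarith
  have hq : 0 < (ε - ε / n) / (1 + 1 / n) := by positivity
  have hqε : (ε - ε / n) / (1 + 1 / n) ≤ ε := by
    rw [div_le_iff₀ (by positivity)]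
    have : 0 ≤ ε * (1 / n) := by positivity
    linarith
  -- the uncovered volume drops below that of a ball of radius `ε / n`
  have hcov : (1 - p) ^ k * (R + ε / n) ^ n < (ε / n) ^ n := by
    have hp1 : p ≤ 1 := by
      have h0 : (ε - ε / n) / (1 + 1 / n) / ((R + ε / n) * (1 + 1 / n)) ≤ 1 := by
        rw [div_le_one (by positivity)]
        have : 0 ≤ (R + ε / n) * (1 / n) := by positivity
        linarith
      have h1 : 1 / (n : ℝ) ≤ 1 := by rw [div_le_one hn0]; linarith
      calc p ≤ 1 * 1 := by
            rw [hp]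
            gcongr
            exact pow_le_one₀ (by positivity) h0
        _ = 1 := by norm_num
    have hpk : n * (2 * Real.log n) < p * k := by
      calc n * (2 * Real.log n) = 1 / (n * Real.exp 5 * T ^ n) * M := by
            rw [hM]
            field_simp
        _ < 1 / (n * Real.exp 5 * T ^ n) * k := by gcongr
        _ ≤ p * k := by gcongr
    have h1 : (1 - p) ^ k < ((n : ℝ) ^ 2)⁻¹ ^ n := by
      calc (1 - p) ^ k ≤ Real.exp (-p) ^ k := by
            refine pow_le_pow_left₀ (by linarith) ?_ k
            linarith [Real.add_one_le_exp (-p)]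
        _ = Real.exp (-(p * k)) := by rw [← Real.exp_nat_mul]; congr 1; ring
        _ < Real.exp (-(n * (2 * Real.log n))) := by gcongr
        _ = ((n : ℝ) ^ 2)⁻¹ ^ n := by
            rw [← Real.exp_log (show (0 : ℝ) < ((n : ℝ) ^ 2)⁻¹ by positivity),
              ← Real.exp_nat_mul, Real.log_inv, Real.log_pow]
            congr 1
            push_cast
            ring
    have h2 : R + ε / n ≤ n ^ 2 * (ε / n) := by
      have hTn' : T ≤ n / 2 := by
        refine hT2.le.trans ?_
        gcongr
        linarith
      have hRT : R = T * ε := by rw [hT]; field_simp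
      have h3 : R ≤ n / 2 * ε := by rw [hRT]; gcongr
      have h4 : ε / n ≤ n / 2 * ε := by
        rw [div_le_iff₀ hn0]
        nlinarith [mul_le_mul hn2' hn2' (by norm_num) hn0.le]
      calc R + ε / n ≤ n * ε := by linarith
        _ = n ^ 2 * (ε / n) := by field_simp
    calc (1 - p) ^ k * (R + ε / n) ^ n < ((n : ℝ) ^ 2)⁻¹ ^ n * (R + ε / n) ^ n := by gcongr
      _ ≤ ((n : ℝ) ^ 2)⁻¹ ^ n * (n ^ 2 * (ε / n)) ^ n := by gcongr
      _ = (ε / n) ^ n := by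
          rw [← mul_pow]
          congr 1
          field_simp
  obtain ⟨C, hC, hCcov⟩ := exists_cover hq hδ (by linarith)
    (show (0 : ℝ) < 1 / n by positivity) (by rw [div_le_one hn0]; linarith) hcov
  have hL : sInf {k : ℕ | ∃ C : Finset (EuclideanSpace ℝ (Fin n)), C.card = k ∧
      ∀ x ∈ closedBall (0 : EuclideanSpace ℝ (Fin n)) R, ∃ c ∈ C, dist x c ≤ ε} ≤ k := by
    refine le_trans (Nat.sInf_le ⟨C, rfl, fun x hx => ?_⟩) hC
    obtain ⟨c, hc, hd⟩ := hCcov x hx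
    refine ⟨c, hc, hd.trans_eq ?_⟩
    rw [div_mul_cancel₀ _ (by positivity)]
    ring
  have hfive : (n : ℝ) ^ ((5 : ℝ) / 2) = n ^ 2 * (n : ℝ) ^ ((1 : ℝ) / 2) := by
    rw [← Real.rpow_natCast, ← Real.rpow_add hn0]
    norm_num
  have hkfive : (k : ℝ) ≤ (n : ℝ) ^ ((5 : ℝ) / 2) * T ^ n := by
    have h1 : (1 : ℝ) ≤ n ^ 2 * Real.log n * T ^ n := by
      have : (1 : ℝ) ≤ n ^ 2 := by nlinarith
      exact one_le_mul_of_one_le_of_one_le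
        (one_le_mul_of_one_le_of_one_le this (by linarith)) hTn
    calc (k : ℝ) ≤ M + 2 := hkM'
      _ ≤ M + 2 * (n ^ 2 * Real.log n * T ^ n) := by linarith
      _ = n ^ 2 * ((2 * (Real.exp 5 + 1)) * Real.log n) * T ^ n := by rw [hM]; ring
      _ ≤ n ^ 2 * (n : ℝ) ^ ((1 : ℝ) / 2) * T ^ n := by gcongr
      _ = _ := by rw [hfive]
  have hconst : (n : ℝ) ^ ((5 : ℝ) / 2) ≤
      8 * Real.exp 1 * (n : ℝ) ^ ((5 : ℝ) / 2) * Real.log n / (Real.log n - 2) := by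
    rw [le_div_iff₀ (by linarith)]
    have h1 : (1 : ℝ) ≤ 8 * Real.exp 1 := by linarith [Real.add_one_le_exp (1 : ℝ)]
    have h2 : (0 : ℝ) < (n : ℝ) ^ ((5 : ℝ) / 2) := by positivity
    calc (n : ℝ) ^ ((5 : ℝ) / 2) * (Real.log n - 2)
        ≤ (n : ℝ) ^ ((5 : ℝ) / 2) * Real.log n := by gcongr; linarith
      _ = 1 * ((n : ℝ) ^ ((5 : ℝ) / 2) * Real.log n) := by ring
      _ ≤ 8 * Real.exp 1 * ((n : ℝ) ^ ((5 : ℝ) / 2) * Real.log n) := by gcongr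
      _ = _ := by ring
  calc _ ≤ (k : ℝ) := by exact_mod_cast hL
    _ ≤ _ := hkfive
    _ ≤ _ := by gcongr
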